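/- arXiv:2301.05153 — 2 statements merged into one kernel-verified Lean document; each statement's English description precedes it below -/
import Mathlib

section
/- Let m be a multicore and let m' = s^{jk}_{il}(m) for some i,l ∈ {0,…,e−1} and j,k ∈ {1,…,r}. Fix ī ∈ ℤ/eℤ. Then d_ī(m') ≥ d_ī(m) − 2. Moreover, if γ^{jk}_{il}(m) = 1, then d_ī(m') ≥ d_ī(m) − 1. -/
/-!
Combinatorial framework for multipartitions, residues, β-sets, abacus levels,
weights, hubs, core blocks and Scopes-type moves, following Fayers and the paper.
Rows and columns of Young diagrams are indexed from 0, so the node in row `b`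
and column `c` (0-based) of component `j` has residue `a j + c - b` mod `e`.
-/

open scoped Classical

namespace AK

/-- A partition, given by its (antitone, finitely supported) sequence of parts,
rows indexed from `0`. -/
structure PartitionFun : Type where
  part : ℕ → ℕ
  antitone : Antitone part
  finite_support : ∃ N, ∀ b, N ≤ b → part b = 0

/-- The node in row `b`, column `c` (0-based) belongs to the Young diagram. -/
def PartitionFun.InDiag (lam : PartitionFun) (b c : ℕ) : Prop := c < lam.part b

/-- The node `(b,c)` is removable: deleting it leaves the diagram of a partition. -/
def PartitionFun.Removable (lam : PartitionFun) (b c : ℕ) : Prop :=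
  lam.part b = c + 1 ∧ lam.part (b + 1) ≤ c

/-- The node `(b,c)` is addable: adjoining it gives the diagram of a partition. -/
def PartitionFun.Addable (lam : PartitionFun) (b c : ℕ) : Prop :=
  lam.part b = c ∧ (b = 0 ∨ lam.part b < lam.part (b - 1))

/-- An `r`-multipartition. -/
abbrev Multipartition (r : ℕ) := Fin r → PartitionFun

/-- Nodes: `(b, c, j)` with row `b`, column `c`, component `j`. -/
abbrev Node (r : ℕ) := ℕ × ℕ × Fin r

/-- The Young diagram of a multipartition, as a set of nodes. -/
def diag {r : ℕ} (lam : Multipartition r) : Set (Node r) :=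
  {x | (lam x.2.2).InDiag x.1 x.2.1}

/-- The size `n` of a multipartition of `n`. -/
noncomputable def msize {r : ℕ} (lam : Multipartition r) : ℕ :=
  Set.ncard (diag lam)

/-- `c_i(λ)`: the number of nodes of residue `i` (mod `e`). -/
noncomputable def nodeCount {r : ℕ} (e : ℕ) (a : Fin r → ℤ) (lam : Multipartition r)
    (i : ℤ) : ℕ :=
  Set.ncard {x : Node r | (lam x.2.2).InDiag x.1 x.2.1 ∧
    (a x.2.2 + (x.2.1 : ℤ) - (x.1 : ℤ)) % (e : ℤ) = i % e}

/-- Number of removable nodes of residue `i` in component `j`. -/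
noncomputable def removableCount {r : ℕ} (e : ℕ) (a : Fin r → ℤ) (lam : Multipartition r)
    (i : ℤ) (j : Fin r) : ℕ :=
  Set.ncard {p : ℕ × ℕ | (lam j).Removable p.1 p.2 ∧
    (a j + (p.2 : ℤ) - (p.1 : ℤ)) % (e : ℤ) = i % e}

/-- Number of addable nodes of residue `i` in component `j`. -/
noncomputable def addableCount {r : ℕ} (e : ℕ) (a : Fin r → ℤ) (lam : Multipartition r)
    (i : ℤ) (j : Fin r) : ℕ :=
  Set.ncard {p : ℕ × ℕ | (lam j).Addable p.1 p.2 ∧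
    (a j + (p.2 : ℤ) - (p.1 : ℤ)) % (e : ℤ) = i % e}

/-- `δ^j_i(λ)` = (removable `i`-nodes of component `j`) − (addable `i`-nodes of component `j`). -/
noncomputable def delta {r : ℕ} (e : ℕ) (a : Fin r → ℤ) (lam : Multipartition r)
    (i : ℤ) (j : Fin r) : ℤ :=
  (removableCount e a lam i j : ℤ) - (addableCount e a lam i j : ℤ)

/-- The hub `δ_i(λ) = Σ_j δ^j_i(λ)`. -/
noncomputable def hub {r : ℕ} (e : ℕ) (a : Fin r → ℤ) (lam : Multipartition r) (i : ℤ) : ℤ :=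
  ∑ j : Fin r, delta e a lam i j

/-- Two multipartitions have the same hub. -/
def SameHub {r : ℕ} (e : ℕ) (a : Fin r → ℤ) (lam mu : Multipartition r) : Prop :=
  ∀ i : ℤ, hub e a lam i = hub e a mu i

/-- `d_i(m) = min { δ^j_i(m) : 1 ≤ j ≤ r }`. -/
noncomputable def dmin {r : ℕ} (e : ℕ) (a : Fin r → ℤ) (lam : Multipartition r) (i : ℤ) : ℤ :=
  sInf {x : ℤ | ∃ j : Fin r, delta e a lam i j = x}

/-- The weight `w(λ) = Σ_j c_{a_j}(λ) − (1/2) Σ_{i∈ℤ/eℤ} (c_i(λ) − c_{i+1}(λ))²`. -/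
noncomputable def weight {r : ℕ} (e : ℕ) (a : Fin r → ℤ) (lam : Multipartition r) : ℚ :=
  (∑ j : Fin r, (nodeCount e a lam (a j) : ℚ)) -
    (1 / 2 : ℚ) * ∑ i ∈ Finset.range e,
      ((nodeCount e a lam (i : ℤ) : ℚ) - (nodeCount e a lam ((i : ℤ) + 1) : ℚ)) ^ 2

/-- The β-set `B^j = {λ_b + a_j − b : b ≥ 1}` (here with rows indexed from 0). -/
def betaSet (aj : ℤ) (lam : PartitionFun) : Set ℤ :=
  {x | ∃ b : ℕ, x = (lam.part b : ℤ) + aj - ((b : ℤ) + 1)}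

/-- A partition is an `e`-core: `β ∈ B` implies `β − e ∈ B`. -/
def IsECore (e : ℕ) (aj : ℤ) (lam : PartitionFun) : Prop :=
  ∀ x ∈ betaSet aj lam, x - (e : ℤ) ∈ betaSet aj lam

/-- A multicore: all components are `e`-cores. -/
def IsMulticore {r : ℕ} (e : ℕ) (a : Fin r → ℤ) (lam : Multipartition r) : Prop :=
  ∀ j, IsECore e (a j) (lam j)

/-- `ℓ^a_{ij}(λ)`: the level of the lowest bead on runner `i`, i.e. the largest `x`
with `x·e + i` in the β-set. -/
noncomputable def level (e : ℕ) (aj : ℤ) (lam : PartitionFun) (i : ℕ) : ℤ :=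
  sSup {x : ℤ | x * (e : ℤ) + (i : ℤ) ∈ betaSet aj lam}

/-- `γ^{jk}_i(λ) = ℓ^a_{ij}(λ) − ℓ^a_{ik}(λ)`. -/
noncomputable def gamma {r : ℕ} (e : ℕ) (a : Fin r → ℤ) (lam : Multipartition r)
    (i : ℕ) (j k : Fin r) : ℤ :=
  level e (a j) (lam j) i - level e (a k) (lam k) i

/-- `γ^{jk}_{il}(λ) = γ^{jk}_i(λ) − γ^{jk}_l(λ)`. -/
noncomputable def gammaD {r : ℕ} (e : ℕ) (a : Fin r → ℤ) (lam : Multipartition r)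
    (i l : ℕ) (j k : Fin r) : ℤ :=
  gamma e a lam i j k - gamma e a lam l j k

/-- Move a bead from runner `i` to runner `l` in the β-set `S`: replace the largest
element of `S` congruent to `i` mod `e` by the smallest integer congruent to `l`
mod `e` not in `S`. -/
noncomputable def moveBead (e : ℕ) (i l : ℕ) (S : Set ℤ) : Set ℤ :=
  insert (sInf {x : ℤ | x % (e : ℤ) = (l : ℤ) % e ∧ x ∉ S})
    (S \ {sSup {x : ℤ | x % (e : ℤ) = (i : ℤ) % e ∧ x ∈ S}})

/-- The effect of `s^{jk}_{il}` on the tuple of β-sets: move a bead from runner `i`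
to runner `l` in component `j`, and from runner `l` to runner `i` in component `k`. -/
noncomputable def swapSets {r : ℕ} (e i l : ℕ) (j k : Fin r) (S : Fin r → Set ℤ) :
    Fin r → Set ℤ :=
  Function.update (Function.update S j (moveBead e i l (S j))) k
    (moveBead e l i (Function.update S j (moveBead e i l (S j)) k))

/-- `m' = s^{jk}_{il}(m)`, expressed via β-sets. -/
def IsSwap {r : ℕ} (e : ℕ) (a : Fin r → ℤ) (i l : ℕ) (j k : Fin r)
    (m m' : Multipartition r) : Prop :=
  ∀ j', betaSet (a j') (m' j') = swapSets e i l j k (fun t => betaSet (a t) (m t)) j'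

/-- `λ` lies in a core block: its weight is minimal among the weights of all
multipartitions with the same hub. -/
def MinimalWeight {r : ℕ} (e : ℕ) (a : Fin r → ℤ) (lam : Multipartition r) : Prop :=
  ∀ mu : Multipartition r, SameHub e a lam mu → weight e a lam ≤ weight e a mu

/-- `(b_0,…,b_{e−1})` is a base tuple for `mu` with respect to the multicharge `a'`
(congruent to `a` componentwise mod `e`): each `ℓ^{a'}_{ij}(mu)` is `b i` or `b i + 1`. -/
def IsBaseTuple {r : ℕ} (e : ℕ) (a : Fin r → ℤ) (mu : Multipartition r)
    (a' : Fin r → ℤ) (b : ℕ → ℤ) : Prop :=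
  (∀ j, (e : ℤ) ∣ (a' j - a j)) ∧
    ∀ i < e, ∀ j, level e (a' j) (mu j) i = b i ∨ level e (a' j) (mu j) i = b i + 1

/-- `K_i(C)` for the core block of `mu`: among all base tuples (over all admissible
multicharges), take `b i` maximal and then `b (i−1)` minimal, and set
`K_i = b_i − b_{i−1} − 1` for `i ≠ 0`, `K_0 = b_0 − b_{e−1} − 2`. -/
noncomputable def Kconst {r : ℕ} (e : ℕ) (a : Fin r → ℤ) (mu : Multipartition r)
    (i : ℕ) : ℤ :=
  let Bi : ℤ := sSup {x : ℤ | ∃ a' bt, IsBaseTuple e a mu a' bt ∧ bt i = x}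
  let iprev : ℕ := if i = 0 then e - 1 else i - 1
  let Bp : ℤ := sInf {x : ℤ | ∃ a' bt, IsBaseTuple e a mu a' bt ∧ bt i = Bi ∧ bt iprev = x}
  Bi - Bp - (if i = 0 then 2 else 1)

/-- The map `φ_i : ℤ → ℤ`. -/
def phiMap (e i : ℕ) (x : ℤ) : ℤ :=
  if x % (e : ℤ) = ((i : ℤ) - 1) % e then x + 1
  else if x % (e : ℤ) = (i : ℤ) % e then x - 1
  else x

/-- Lexicographic order on multipartitions: `λ > μ`. -/
def lexGT {r : ℕ} (lam mu : Multipartition r) : Prop :=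
  ∃ j : Fin r, (∀ j' < j, (lam j').part = (mu j').part) ∧
    ∃ i : ℕ, (∀ i' < i, (lam j).part i' = (mu j).part i') ∧
      (mu j).part i < (lam j).part i

/-- `x` is above `y`: `j < j'` or (`j = j'` and `b < b'`). -/
def NodeAbove {r : ℕ} (x y : Node r) : Prop :=
  x.2.2 < y.2.2 ∨ (x.2.2 = y.2.2 ∧ x.1 < y.1)

/-- The order on nodes: `x < y` iff `y` is above `x`. -/
def NodeLT {r : ℕ} (x y : Node r) : Prop := NodeAbove y x

/-- `N_A(λ)` = (addable `i`-nodes of `λ` below `A`) − (removable `i`-nodes of `λ` below `A`). -/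
noncomputable def Nfac {r : ℕ} (e : ℕ) (a : Fin r → ℤ) (lam : Multipartition r)
    (i : ℤ) (A : Node r) : ℤ :=
  (Set.ncard {y : Node r | (lam y.2.2).Addable y.1 y.2.1 ∧
      (a y.2.2 + (y.2.1 : ℤ) - (y.1 : ℤ)) % (e : ℤ) = i % e ∧ NodeAbove A y} : ℤ) -
  (Set.ncard {y : Node r | (lam y.2.2).Removable y.1 y.2.1 ∧
      (a y.2.2 + (y.2.1 : ℤ) - (y.1 : ℤ)) % (e : ℤ) = i % e ∧ NodeAbove A y} : ℤ)

/-- `lam` is obtained from `mu` by adding one `e`-rim hook to some component: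
on β-sets, some `β ∈ B^j` with `β + e ∉ B^j` is replaced by `β + e`. -/
def AddRimHook {r : ℕ} (e : ℕ) (a : Fin r → ℤ) (mu lam : Multipartition r) : Prop :=
  ∃ (j : Fin r) (β : ℤ), β ∈ betaSet (a j) (mu j) ∧ β + (e : ℤ) ∉ betaSet (a j) (mu j) ∧
    betaSet (a j) (lam j) = insert (β + (e : ℤ)) (betaSet (a j) (mu j) \ {β}) ∧
    ∀ j' ≠ j, betaSet (a j') (lam j') = betaSet (a j') (mu j')

/-- The number of inversions (length) of a permutation of `Fin d`. -/
noncomputable def permLength (d : ℕ) (σ : Equiv.Perm (Fin d)) : ℕ :=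
  (Finset.univ.filter (fun p : Fin d × Fin d => p.1 < p.2 ∧ σ p.2 < σ p.1)).card

/-!
For sets with finite symmetric difference, the excess `|A \ B| - |B \ A|` behaves like a difference
of cardinalities, and sending removable and addable nodes to their contents shows that `δ_t` is the
excess of runner `t` of the abacus over runner `t - 1`. Hence the difference of `δ_t` for two
partitions is the excess between their β-sets on runner `t` minus that on runner `t - 1`. Moving a
bead from runner `i` to runner `l` creates an excess of `[l ≡ c] - [i ≡ c]` on runner `c`, so `δ_t`
drops by at most `2`. In component `j` it drops by exactly `2` only if `i ≡ t` and `l ≡ t - 1`; in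
that case, for a multicore, `γ^{jk}_{il} = δ^j_t - δ^k_t`, so `γ^{jk}_{il} ≥ 1` puts `δ^j_t`
strictly above the minimum beforehand. Component `k` is symmetric.
-/

section Excess

variable {α β : Type*} {A B C U : Set α}

/-- The relative size `|A \ B| - |B \ A|` of two sets: a substitute for `|A| - |B|` when `A` and `B`
are infinite. It is meaningful when the symmetric difference is finite, since `Set.ncard` is `0` on
infinite sets. -/
noncomputable def excess (A B : Set α) : ℤ :=
  (A \ B).ncard - (B \ A).ncard

theorem excess_eq_ncard_inter_sub_ncard_inter (hU : U.Finite) (hAB : symmDiff A B ⊆ U) :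
    excess A B = (A ∩ U).ncard - (B ∩ U).ncard := by
  have hA : (A ∩ U) \ (B ∩ U) = A \ B := by
    rw [← Set.inter_sdiff_distrib_right, Set.inter_eq_left.mpr (Set.subset_union_left.trans hAB)]
  have hB : (B ∩ U) \ (A ∩ U) = B \ A := by
    rw [← Set.inter_sdiff_distrib_right, Set.inter_eq_left.mpr (Set.subset_union_right.trans hAB)]
  have h := Set.ncard_sdiff_add_ncard (A ∩ U) (B ∩ U) (hU.inter_of_right A) (hU.inter_of_right B)
  have h' := Set.ncard_sdiff_add_ncard (B ∩ U) (A ∩ U) (hU.inter_of_right B) (hU.inter_of_right A)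
  rw [hA] at h
  rw [hB, Set.union_comm] at h'
  unfold excess
  lia

theorem excess_add_excess (hAB : (symmDiff A B).Finite) (hBC : (symmDiff B C).Finite) :
    excess A B + excess B C = excess A C := by
  have hU := hAB.union hBC
  rw [excess_eq_ncard_inter_sub_ncard_inter hU Set.subset_union_left,
    excess_eq_ncard_inter_sub_ncard_inter hU Set.subset_union_right,
    excess_eq_ncard_inter_sub_ncard_inter hU (symmDiff_triangle A B C)]
  ring

theorem excess_preimage_equiv (f : β ≃ α) (A B : Set α) :
    excess (f ⁻¹' A) (f ⁻¹' B) = excess A B := by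
  have ncard_preimage (V : Set α) : (f ⁻¹' V).ncard = V.ncard :=
    Set.ncard_preimage_of_injective_subset_range f.injective (by simp)
  simp only [excess, ← Set.preimage_sdiff, ncard_preimage]

theorem excess_Iic (p q : ℤ) : excess (Set.Iic p) (Set.Iic q) = p - q := by
  have ncard_Ioc (u v : ℤ) : (Set.Ioc u v).ncard = (v - u).toNat := by
    rw [← Finset.coe_Ioc, Set.ncard_coe_finset, Int.card_Ioc]
  simp only [excess, Set.Iic_sdiff_Iic, ncard_Ioc]
  lia

end Excess

/-- A Maya diagram: a set of integers containing all sufficiently small integers and no sufficiently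
large ones, the shape shared by β-sets and their runners. -/
structure IsMaya (S : Set ℤ) : Prop where
  bddAbove : BddAbove S
  bddBelow_compl : BddBelow Sᶜ

namespace IsMaya

variable {S T U : Set ℤ}

theorem nonempty (hS : IsMaya S) : S.Nonempty := by
  obtain ⟨N, hN⟩ := hS.bddBelow_compl
  exact ⟨N - 1, by_contra fun h => by linarith [hN h]⟩

theorem nonempty_compl (hS : IsMaya S) : Sᶜ.Nonempty := by
  obtain ⟨M, hM⟩ := hS.bddAbove
  exact ⟨M + 1, fun h => by linarith [hM h]⟩

theorem finite_sdiff (hS : IsMaya S) (hT : IsMaya T) : (S \ T).Finite :=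
  (hT.bddBelow_compl.mono fun _ h => h.2).finite_of_bddAbove
    (hS.bddAbove.mono Set.sdiff_subset)

theorem finite_symmDiff (hS : IsMaya S) (hT : IsMaya T) : (symmDiff S T).Finite :=
  (hS.finite_sdiff hT).union (hT.finite_sdiff hS)

theorem excess_add_excess (hS : IsMaya S) (hT : IsMaya T) (hU : IsMaya U) :
    excess S T + excess T U = excess S U :=
  AK.excess_add_excess (hS.finite_symmDiff hT) (hT.finite_symmDiff hU)

theorem insert (hS : IsMaya S) (x : ℤ) : IsMaya (insert x S) :=
  ⟨hS.bddAbove.insert x, hS.bddBelow_compl.mono <| Set.compl_subset_compl.mpr <|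
    Set.subset_insert x S⟩

theorem sdiff_singleton (hS : IsMaya S) (x : ℤ) : IsMaya (S \ {x}) := by
  refine ⟨hS.bddAbove.mono Set.sdiff_subset, (hS.bddBelow_compl.insert x).mono fun y hy => ?_⟩
  grind

theorem eq_Iic_csSup (hS : IsMaya S) (hpred : ∀ x ∈ S, x - 1 ∈ S) : S = Set.Iic (sSup S) := by
  refine Set.Subset.antisymm (fun x hx => le_csSup hS.bddAbove hx) fun x hx => ?_
  induction x, hx using Int.leInductionDown with
  | base => exact Int.csSup_mem hS.nonempty hS.bddAbove
  | pred x _ hx => exact hpred x hx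

end IsMaya

section Runner

variable {e : ℕ} {S : Set ℤ} {c c' : ℤ}

/-- The levels of the beads of `S` on runner `c` of the `e`-abacus. Here `c` is any integer, not
only a standard residue: replacing `c` by `c + e` lowers all levels by one. -/
def runner (e : ℕ) (c : ℤ) (S : Set ℤ) : Set ℤ :=
  {x | x * e + c ∈ S}

theorem image_runner (e : ℕ) (c : ℤ) (S : Set ℤ) :
    (fun x : ℤ => x * e + c) '' runner e c S = {x ∈ S | x ≡ c [ZMOD e]} := by
  ext x
  constructor
  · rintro ⟨y, hy, rfl⟩
    exact ⟨hy, by simp [Int.ModEq]⟩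
  · rintro ⟨hx, hxc⟩
    obtain ⟨y, hy⟩ := hxc.symm.dvd
    have hxy : y * e + c = x := by linarith
    exact ⟨y, by rwa [runner, Set.mem_ofPred_eq, hxy], hxy⟩

theorem ncard_runner (he : 0 < e) (c : ℤ) (S : Set ℤ) :
    (runner e c S).ncard = {x ∈ S | x ≡ c [ZMOD e]}.ncard := by
  rw [← image_runner, Set.ncard_image_of_injective]
  intro x y hxy
  simpa [he.ne'] using hxy

theorem ncard_runner_singleton (he : 0 < e) (c x : ℤ) :
    (runner e c {x}).ncard = if x ≡ c [ZMOD e] then 1 else 0 := by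
  rw [ncard_runner he]
  split_ifs with h
  · rw [show {y ∈ ({x} : Set ℤ) | y ≡ c [ZMOD e]} = {x} by grind, Set.ncard_singleton]
  · rw [show {y ∈ ({x} : Set ℤ) | y ≡ c [ZMOD e]} = ∅ by grind, Set.ncard_empty]

theorem excess_runner_congr (hc : c ≡ c' [ZMOD e]) (S T : Set ℤ) :
    excess (runner e c S) (runner e c T) = excess (runner e c' S) (runner e c' T) := by
  obtain ⟨k, hk⟩ := hc.symm.dvd
  have runner_eq (V : Set ℤ) : runner e c V = Equiv.addRight k ⁻¹' runner e c' V := by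
    ext x
    simp only [runner, Set.mem_preimage, Set.mem_ofPred_eq, Equiv.coe_addRight]
    rw [show (x + k) * e + c' = x * e + c by linarith]
  rw [runner_eq, runner_eq, excess_preimage_equiv]

theorem IsMaya.runner (he : 0 < e) (hS : IsMaya S) (c : ℤ) : IsMaya (runner e c S) := by
  have he' : (0 : ℤ) < e := mod_cast he
  obtain ⟨M, hM⟩ := hS.bddAbove
  obtain ⟨N, hN⟩ := hS.bddBelow_compl
  refine ⟨⟨(M - c) / e, fun x hx => ?_⟩, ⟨(N - c) / e, fun x hx => ?_⟩⟩
  · exact (Int.le_ediv_iff_mul_le he').mpr (by linarith [hM hx])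
  · exact Int.ediv_le_of_le_mul he' (by linarith [hN hx])

end Runner

section MoveBead

variable {e : ℕ} {S : Set ℤ}

theorem IsMaya.moveBead (hS : IsMaya S) (e i l : ℕ) : IsMaya (moveBead e i l S) :=
  (hS.sdiff_singleton _).insert _

theorem exists_moveBead_eq_insert_sdiff (he : 0 < e) (hS : IsMaya S) (i l : ℕ) :
    ∃ x ∈ S, ∃ y ∉ S, x ≡ i [ZMOD e] ∧ y ≡ l [ZMOD e] ∧
      moveBead e i l S = insert y (S \ {x}) := by
  have bead_mem := Int.csSup_mem (s := {x : ℤ | x ≡ i [ZMOD e] ∧ x ∈ S})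
    (by
      obtain ⟨x, hx⟩ := (hS.runner he i).nonempty
      exact ⟨x * e + i, by simp [Int.ModEq], hx⟩)
    (hS.bddAbove.mono fun _ h => h.2)
  have gap_mem := Int.csInf_mem (s := {x : ℤ | x ≡ l [ZMOD e] ∧ x ∉ S})
    (by
      obtain ⟨x, hx⟩ := (hS.runner he l).nonempty_compl
      exact ⟨x * e + l, by simp [Int.ModEq], hx⟩)
    (hS.bddBelow_compl.mono fun _ h => h.2)
  exact ⟨_, bead_mem.2, _, gap_mem.2, bead_mem.1, gap_mem.1, rfl⟩

/-- The change in the number of beads on runner `c` when a bead moves from runner `i` to runner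
`l`. -/
def beadGain (e : ℕ) (i l c : ℤ) : ℤ :=
  (if l ≡ c [ZMOD e] then 1 else 0) - if i ≡ c [ZMOD e] then 1 else 0

theorem neg_beadGain (e : ℕ) (i l c : ℤ) : -beadGain e i l c = beadGain e l i c :=
  neg_sub _ _

theorem excess_runner_moveBead (he : 0 < e) (hS : IsMaya S) (i l : ℕ) (c : ℤ) :
    excess (runner e c (moveBead e i l S)) (runner e c S) = beadGain e i l c := by
  obtain ⟨x, hx, y, hy, hxi, hyl, hmove⟩ := exists_moveBead_eq_insert_sdiff he hS i l
  have gained : moveBead e i l S \ S = {y} := by grind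
  have lost : S \ moveBead e i l S = {x} := by grind
  have hxc : x ≡ c [ZMOD e] ↔ i ≡ c [ZMOD e] := ⟨hxi.symm.trans, hxi.trans⟩
  have hyc : y ≡ c [ZMOD e] ↔ l ≡ c [ZMOD e] := ⟨hyl.symm.trans, hyl.trans⟩
  have runner_sdiff (V W : Set ℤ) : runner e c V \ runner e c W = runner e c (V \ W) := rfl
  simp only [excess, beadGain, runner_sdiff, gained, lost, ncard_runner_singleton he, hxc, hyc,
    Nat.cast_ite, Nat.cast_one, Nat.cast_zero]

/-- The change in `δ_t` when a bead moves from runner `i` to runner `l`. -/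
def deltaGain (e : ℕ) (i l t : ℤ) : ℤ :=
  beadGain e i l t - beadGain e i l (t - 1)

theorem neg_deltaGain (e : ℕ) (i l t : ℤ) : -deltaGain e i l t = deltaGain e l i t := by
  simp only [deltaGain, ← neg_beadGain e i l]
  ring

theorem neg_two_le_deltaGain (e : ℕ) (i l t : ℤ) : -2 ≤ deltaGain e i l t := by
  unfold deltaGain beadGain
  split_ifs <;> norm_num

theorem modEq_of_deltaGain_eq_neg_two {e : ℕ} {i l t : ℤ} (h : deltaGain e i l t = -2) :
    i ≡ t [ZMOD e] ∧ l ≡ t - 1 [ZMOD e] := by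
  unfold deltaGain beadGain at h
  split_ifs at h <;> lia

end MoveBead

section Beta

variable (aj : ℤ) (lam : PartitionFun)

theorem strictAnti_beta : StrictAnti fun b : ℕ => (lam.part b : ℤ) + aj - (b + 1) := by
  intro b b' hb
  have := lam.antitone hb.le
  lia

theorem isMaya_betaSet : IsMaya (betaSet aj lam) := by
  constructor
  · refine ⟨lam.part 0 + aj - 1, ?_⟩
    rintro _ ⟨b, rfl⟩
    simpa using (strictAnti_beta aj lam).antitone b.zero_le
  · obtain ⟨N, hN⟩ := lam.finite_support
    refine ⟨aj - N, fun x hx => by_contra fun hlt => hx ⟨(aj - 1 - x).toNat, ?_⟩⟩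
    rw [hN _ (by lia)]
    lia

theorem bijOn_content_removable :
    Set.BijOn (fun p : ℕ × ℕ => aj + (p.2 : ℤ) - p.1) {p | lam.Removable p.1 p.2}
      {x | x ∈ betaSet aj lam ∧ x - 1 ∉ betaSet aj lam} := by
  refine ⟨?_, ?_, ?_⟩
  · rintro ⟨b, c⟩ ⟨hb, hsucc⟩
    refine ⟨⟨b, by lia⟩, ?_⟩
    rintro ⟨b', hb'⟩
    rcases Nat.lt_or_ge b b' with hlt | hle
    · have := lam.antitone (Nat.succ_le_of_lt hlt)
      lia
    · have := lam.antitone hle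
      lia
  · rintro ⟨b, c⟩ ⟨hb, -⟩ ⟨b', c'⟩ ⟨hb', -⟩ heq
    have : b = b' := (strictAnti_beta aj lam).injective (by grind)
    grind
  · rintro _ ⟨⟨b, rfl⟩, hpred⟩
    have hne : lam.part (b + 1) ≠ lam.part b := fun h => hpred ⟨b + 1, by lia⟩
    have hlt : lam.part (b + 1) < lam.part b := (lam.antitone b.le_succ).lt_of_ne hne
    exact ⟨(b, lam.part b - 1), ⟨by lia, by lia⟩, by lia⟩

theorem bijOn_content_addable :
    Set.BijOn (fun p : ℕ × ℕ => aj + (p.2 : ℤ) - p.1) {p | lam.Addable p.1 p.2}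
      {x | x - 1 ∈ betaSet aj lam ∧ x ∉ betaSet aj lam} := by
  refine ⟨?_, ?_, ?_⟩
  · rintro ⟨b, c⟩ ⟨hb, hprev⟩
    refine ⟨⟨b, by lia⟩, ?_⟩
    rintro ⟨b', hb'⟩
    rcases Nat.lt_or_ge b' b with hlt | hle
    · have := lam.antitone (Nat.le_sub_one_of_lt hlt)
      lia
    · have := lam.antitone hle
      lia
  · rintro ⟨b, c⟩ ⟨hb, -⟩ ⟨b', c'⟩ ⟨hb', -⟩ heq
    have : b = b' := (strictAnti_beta aj lam).injective (by grind)
    grind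
  · rintro x ⟨⟨b, hb⟩, hx⟩
    refine ⟨(b, lam.part b), ⟨rfl, or_iff_not_imp_left.mpr fun hb0 => ?_⟩, by lia⟩
    have hne : lam.part b ≠ lam.part (b - 1) := fun h => hx ⟨b - 1, by lia⟩
    exact (lam.antitone b.pred_le).lt_of_ne hne

end Beta

theorem ncard_setOf_modEq_of_bijOn {α : Type*} {e : ℕ} (he : 0 < e) {f : α → ℤ} {s : Set α}
    {S : Set ℤ} (hf : Set.BijOn f s S) (t : ℤ) :
    {p ∈ s | f p ≡ t [ZMOD e]}.ncard = (runner e t S).ncard := by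
  have himage : f '' {p ∈ s | f p ≡ t [ZMOD e]} = {x ∈ S | x ≡ t [ZMOD e]} := by
    rw [← hf.image_eq]
    grind
  rw [ncard_runner he, ← himage,
    (hf.injOn.mono (Set.sep_subset s _)).ncard_image]

section Delta

variable {e r : ℕ} {a : Fin r → ℤ} {m m' : Multipartition r} {i l : ℕ} {j k : Fin r}

theorem delta_eq_excess_runner (he : 0 < e) (a : Fin r → ℤ) (m : Multipartition r) (t : ℤ)
    (j : Fin r) :
    delta e a m t j =
      excess (runner e t (betaSet (a j) (m j))) (runner e (t - 1) (betaSet (a j) (m j))) := by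
  have removable := ncard_setOf_modEq_of_bijOn he (bijOn_content_removable (a j) (m j)) t
  have addable := ncard_setOf_modEq_of_bijOn he (bijOn_content_addable (a j) (m j)) t
  have pred_mem_iff (x : ℤ) : x * e + t - 1 ∈ betaSet (a j) (m j) ↔
      x ∈ runner e (t - 1) (betaSet (a j) (m j)) := by
    rw [add_sub_assoc, runner, Set.mem_ofPred_eq]
  simp only [runner, Set.mem_ofPred_eq, pred_mem_iff] at removable addable
  exact congrArg₂ (fun u v : ℕ => (u : ℤ) - v) removable addable

theorem delta_sub_delta (he : 0 < e) (a : Fin r → ℤ) (m m' : Multipartition r) (t : ℤ)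
    (j k : Fin r) :
    delta e a m t j - delta e a m' t k =
      excess (runner e t (betaSet (a j) (m j))) (runner e t (betaSet (a k) (m' k))) -
        excess (runner e (t - 1) (betaSet (a j) (m j)))
          (runner e (t - 1) (betaSet (a k) (m' k))) := by
  have hS (c : ℤ) := (isMaya_betaSet (a j) (m j)).runner he c
  have hT (c : ℤ) := (isMaya_betaSet (a k) (m' k)).runner he c
  rw [delta_eq_excess_runner he, delta_eq_excess_runner he]
  linarith [(hS t).excess_add_excess (hS (t - 1)) (hT (t - 1)),
    (hS t).excess_add_excess (hT t) (hT (t - 1))]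

theorem IsECore.runner_eq_Iic_level (he : 0 < e) {aj : ℤ} {lam : PartitionFun}
    (hcore : IsECore e aj lam) (i : ℕ) :
    runner e i (betaSet aj lam) = Set.Iic (level e aj lam i) :=
  ((isMaya_betaSet aj lam).runner he i).eq_Iic_csSup fun x hx => by
    simpa only [runner, Set.mem_ofPred_eq, sub_one_mul, sub_add_eq_add_sub] using hcore _ hx

theorem IsMulticore.excess_runner_eq_gamma (he : 0 < e) (hcore : IsMulticore e a m) (i : ℕ)
    (j k : Fin r) :
    excess (runner e i (betaSet (a j) (m j))) (runner e i (betaSet (a k) (m k))) =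
      gamma e a m i j k := by
  rw [(hcore j).runner_eq_Iic_level he, (hcore k).runner_eq_Iic_level he, excess_Iic, gamma]

theorem IsMulticore.delta_sub_delta_eq_gammaD (he : 0 < e) (hcore : IsMulticore e a m) {t : ℤ}
    (hi : i ≡ t [ZMOD e]) (hl : l ≡ t - 1 [ZMOD e]) (j k : Fin r) :
    delta e a m t j - delta e a m t k = gammaD e a m i l j k := by
  rw [delta_sub_delta he, ← excess_runner_congr hi, ← excess_runner_congr hl,
    hcore.excess_runner_eq_gamma he, hcore.excess_runner_eq_gamma he, gammaD]

theorem gammaD_swap (e : ℕ) (a : Fin r → ℤ) (m : Multipartition r) (i l : ℕ) (j k : Fin r) :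
    gammaD e a m l i k j = gammaD e a m i l j k := by
  unfold gammaD gamma
  ring

theorem IsSwap.excess_runner (he : 0 < e) (hswap : IsSwap e a i l j k m m') (c : ℤ) (q : Fin r) :
    excess (runner e c (betaSet (a q) (m' q))) (runner e c (betaSet (a q) (m q))) =
      (if q = j then beadGain e i l c else 0) + if q = k then beadGain e l i c else 0 := by
  have hS := isMaya_betaSet (a q) (m q)
  have hS' := hS.moveBead e i l
  rw [hswap q, swapSets]
  by_cases hj : q = j <;> by_cases hk : q = k
  · subst hj hk
    simp only [Function.update_self, if_true]
    rw [← (hS'.moveBead e l i |>.runner he c).excess_add_excess (hS'.runner he c) (hS.runner he c),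
      excess_runner_moveBead he hS', excess_runner_moveBead he hS, add_comm]
  · subst hj
    simp [hk, excess_runner_moveBead he hS]
  · subst hk
    simp [hj, excess_runner_moveBead he hS]
  · simp [hj, hk, excess]

theorem IsSwap.delta_eq (he : 0 < e) (hswap : IsSwap e a i l j k m m') (t : ℤ) (q : Fin r) :
    delta e a m' t q = delta e a m t q +
      ((if q = j then deltaGain e i l t else 0) + if q = k then deltaGain e l i t else 0) := by
  rw [← sub_eq_iff_eq_add', delta_sub_delta he, hswap.excess_runner he, hswap.excess_runner he]
  unfold deltaGain
  split_ifs <;> ring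

theorem le_dmin_iff [Nonempty (Fin r)] {t x : ℤ} :
    x ≤ dmin e a m t ↔ ∀ q, x ≤ delta e a m t q :=
  le_ciInf_iff (Set.finite_range _).bddBelow

theorem dmin_le_delta (e : ℕ) (a : Fin r → ℤ) (m : Multipartition r) (t : ℤ) (q : Fin r) :
    dmin e a m t ≤ delta e a m t q :=
  ciInf_le (Set.finite_range _).bddBelow q

theorem IsMulticore.dmin_sub_one_le_delta_add_deltaGain (he : 0 < e) (hcore : IsMulticore e a m)
    (hγ : 1 ≤ gammaD e a m i l j k) (t : ℤ) :
    dmin e a m t - 1 ≤ delta e a m t j + deltaGain e i l t := by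
  have hj := dmin_le_delta e a m t j
  rcases (neg_two_le_deltaGain e i l t).eq_or_lt with hgain | hgain
  · obtain ⟨hi, hl⟩ := modEq_of_deltaGain_eq_neg_two hgain.symm
    have hδ := hcore.delta_sub_delta_eq_gammaD he hi hl j k
    have hk := dmin_le_delta e a m t k
    lia
  · lia

theorem IsSwap.dmin_sub_two_le (he : 0 < e) (hswap : IsSwap e a i l j k m m') (t : ℤ) :
    dmin e a m t - 2 ≤ dmin e a m' t := by
  have : Nonempty (Fin r) := ⟨j⟩
  refine le_dmin_iff.mpr fun q => ?_
  have hq := dmin_le_delta e a m t q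
  have hgain := neg_two_le_deltaGain e i l t
  have hgain' := neg_two_le_deltaGain e l i t
  have hneg := neg_deltaGain e i l t
  rw [hswap.delta_eq he]
  split_ifs <;> lia

theorem IsSwap.dmin_sub_one_le (he : 0 < e) (hcore : IsMulticore e a m)
    (hswap : IsSwap e a i l j k m m') (hγ : 1 ≤ gammaD e a m i l j k) (t : ℤ) :
    dmin e a m t - 1 ≤ dmin e a m' t := by
  have : Nonempty (Fin r) := ⟨j⟩
  refine le_dmin_iff.mpr fun q => ?_
  have hq := dmin_le_delta e a m t q
  have hj := hcore.dmin_sub_one_le_delta_add_deltaGain he hγ t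
  have hk := hcore.dmin_sub_one_le_delta_add_deltaGain he
    (hγ.trans_eq (gammaD_swap e a m i l j k).symm) t
  have hneg := neg_deltaGain e i l t
  rw [hswap.delta_eq he]
  split_ifs with hqj hqk hqk
  · lia
  · rwa [hqj, add_zero]
  · rwa [hqk, zero_add]
  · lia

end Delta

theorem stmt_5_general {e r : ℕ} (he : 0 < e) (a : Fin r → ℤ) (m m' : Multipartition r)
    (i l : ℕ) (j k : Fin r) (hswap : IsSwap e a i l j k m m') (t : ℤ) :
    dmin e a m t - 2 ≤ dmin e a m' t ∧
      (IsMulticore e a m → 1 ≤ gammaD e a m i l j k → dmin e a m t - 1 ≤ dmin e a m' t) :=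
  ⟨hswap.dmin_sub_two_le he t, fun hcore hγ => hswap.dmin_sub_one_le he hcore hγ t⟩

/-- Lemma 4.6: if `m' = s^{jk}_{il}(m)`, then `d_ī(m') ≥ d_ī(m) − 2`;
and if moreover `γ^{jk}_{il}(m) = 1`, then `d_ī(m') ≥ d_ī(m) − 1`. -/
theorem stmt_5 {e r : ℕ} (he : 2 ≤ e) (hr : 0 < r) (a : Fin r → ℤ)
    (m m' : Multipartition r) (hcore : IsMulticore e a m)
    (i l : ℕ) (hi : i < e) (hl : l < e) (hil : i ≠ l) (j k : Fin r)
    (hswap : IsSwap e a i l j k m m') (ibar : ℤ) :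
    dmin e a m' ibar ≥ dmin e a m ibar - 2 ∧
      (gammaD e a m i l j k = 1 → dmin e a m' ibar ≥ dmin e a m ibar - 1) := by
  have h := stmt_5_general (by lia) a m m' i l j k hswap ibar
  exact ⟨h.1, fun hγ => h.2 hcore hγ.ge⟩

end AK
end

section
/- Fix ī ∈ {0,…,e−1}, let C be a core block and let K = K_ī(C). Suppose that m is a multicore with core block C and weight w(m) = w(C) + hr with 0 ≤ h ≤ K. Then d_ī(m) ≥ K − h. -/
/-!
Combinatorial framework for multipartitions, residues, β-sets, abacus levels,
weights, hubs, core blocks and Scopes-type moves, following Fayers and the paper.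
Rows and columns of Young diagrams are indexed from 0, so the node in row `b`
and column `c` (0-based) of component `j` has residue `a j + c - b` mod `e`.
-/

open scoped Classical

namespace AK

/-!
Displaying an `e`-core on an `e`-runner abacus turns everything into levels: `δ^j_{i+1}` is
`ℓ_{i+1,j} - ℓ_{ij}`, each sum `∑_i ℓ_{ij}` depends only on `a_j`, and for multicores with the same
hub each sum `∑_j ℓ_{ij}` agrees. Counting nodes row by row then shows that two multicores `m`, `μ`
with the same hub satisfy `2 (w(m) - w(μ)) = r ∑_{i,j} (ℓ_{ij}(m)² - ℓ_{ij}(μ)²)`.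

If `b` is a base tuple for `μ`, put `x_{ij} = ℓ_{ij}(m) - b_i`. The same expression for `μ` takes
values in `{0, 1}`, the roots of `x (x - 1)`, so the right-hand side equals
`r ∑_{i,j} x_{ij} (x_{ij} - 1)`, a sum of nonnegative terms. When `w(m) = w(μ) + h r`, the terms of
two runners `i ≠ p` in component `j` thus add up to at most `2 h`, which forces
`x_{pj} - x_{ij} ≤ h + 1`.
-/

/-! ### β-numbers -/

namespace PartitionFun

/-- The `b`-th β-number (rows indexed from `0`) of a partition with charge `a`; the β-set is the
range of this strictly decreasing sequence. -/
def beta (lam : PartitionFun) (a : ℤ) (b : ℕ) : ℤ := lam.part b + a - (b + 1)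

variable (lam : PartitionFun) (a : ℤ)

lemma mem_betaSet {x : ℤ} : x ∈ betaSet a lam ↔ ∃ b, lam.beta a b = x :=
  exists_congr fun _ => eq_comm

lemma beta_strictAnti : StrictAnti (lam.beta a) := fun b b' hb => by
  have := lam.antitone hb.le
  unfold beta
  omega

lemma beta_sub_one_mem_betaSet_iff (b : ℕ) :
    lam.beta a b - 1 ∈ betaSet a lam ↔ lam.part (b + 1) = lam.part b := by
  rw [mem_betaSet]
  constructor
  · rintro ⟨b', hb'⟩
    have hlt : b < b' := (lam.beta_strictAnti a).lt_iff_gt.1 (by omega)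
    have hle := (lam.beta_strictAnti a).antitone (Nat.succ_le_of_lt hlt)
    have hpart := lam.antitone b.le_succ
    simp only [beta, Nat.succ_eq_add_one] at hle hb' hpart
    omega
  · intro hpart
    exact ⟨b + 1, by simp only [beta, hpart]; push_cast; ring⟩

lemma beta_add_one_mem_betaSet_iff (b : ℕ) :
    lam.beta a b + 1 ∈ betaSet a lam ↔ b ≠ 0 ∧ lam.part b = lam.part (b - 1) := by
  cases b with
  | zero =>
    rw [mem_betaSet]
    refine iff_of_false ?_ (by simp)
    rintro ⟨b', hb'⟩
    have := (lam.beta_strictAnti a).antitone b'.zero_le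
    omega
  | succ b =>
    rw [mem_betaSet]
    constructor
    · rintro ⟨b', hb'⟩
      have hlt : b' < b + 1 := (lam.beta_strictAnti a).lt_iff_gt.1 (by omega)
      have hle := (lam.beta_strictAnti a).antitone (Nat.le_of_lt_succ hlt)
      have hpart := lam.antitone b.le_succ
      simp only [beta, Nat.succ_eq_add_one, Nat.add_sub_cancel] at hle hb' hpart ⊢
      omega
    · rintro ⟨-, hpart⟩
      exact ⟨b, by simp only [beta, hpart, Nat.add_sub_cancel]; push_cast; ring⟩

lemma bijOn_removable : Set.BijOn (fun p : ℕ × ℕ => a + (p.2 : ℤ) - p.1)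
    {p | lam.Removable p.1 p.2} {x | x ∈ betaSet a lam ∧ x - 1 ∉ betaSet a lam} := by
  have content_eq {b c : ℕ} (hbc : lam.Removable b c) : a + (c : ℤ) - b = lam.beta a b := by
    have := hbc.1
    unfold beta
    omega
  refine ⟨?_, ?_, ?_⟩
  · rintro ⟨b, c⟩ hbc
    have hlt : lam.part (b + 1) < lam.part b := by
      have := hbc.1
      have := hbc.2
      simp only at *
      omega
    simp only [Set.mem_ofPred_eq, content_eq hbc, beta_sub_one_mem_betaSet_iff]
    exact ⟨(lam.mem_betaSet a).2 ⟨b, rfl⟩, hlt.ne⟩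
  · rintro ⟨b, c⟩ hbc ⟨b', c'⟩ hbc' heq
    simp only [content_eq hbc, content_eq hbc'] at heq
    obtain rfl := (lam.beta_strictAnti a).injective heq
    exact Prod.ext rfl (Nat.succ_injective (hbc.1.symm.trans hbc'.1))
  · rintro x ⟨hx, hx'⟩
    obtain ⟨b, rfl⟩ := (lam.mem_betaSet a).1 hx
    rw [beta_sub_one_mem_betaSet_iff] at hx'
    have hlt : lam.part (b + 1) < lam.part b := (lam.antitone b.le_succ).lt_of_ne hx'
    have hbc : lam.Removable b (lam.part b - 1) := ⟨by omega, by omega⟩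
    exact ⟨(b, lam.part b - 1), hbc, content_eq hbc⟩

lemma bijOn_addable : Set.BijOn (fun p : ℕ × ℕ => a + (p.2 : ℤ) - p.1)
    {p | lam.Addable p.1 p.2} {x | x - 1 ∈ betaSet a lam ∧ x ∉ betaSet a lam} := by
  have content_eq {b c : ℕ} (hbc : lam.Addable b c) : a + (c : ℤ) - b = lam.beta a b + 1 := by
    have := hbc.1
    unfold beta
    omega
  refine ⟨?_, ?_, ?_⟩
  · rintro ⟨b, c⟩ hbc
    simp only [Set.mem_ofPred_eq, content_eq hbc, beta_add_one_mem_betaSet_iff,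
      add_sub_cancel_right]
    exact ⟨(lam.mem_betaSet a).2 ⟨b, rfl⟩, fun h => hbc.2.elim h.1 h.2.not_lt⟩
  · rintro ⟨b, c⟩ hbc ⟨b', c'⟩ hbc' heq
    simp only [content_eq hbc, content_eq hbc', add_left_inj] at heq
    obtain rfl := (lam.beta_strictAnti a).injective heq
    exact Prod.ext rfl (hbc.1.symm.trans hbc'.1)
  · rintro x ⟨hx, hx'⟩
    obtain ⟨b, hb⟩ := (lam.mem_betaSet a).1 hx
    obtain rfl : x = lam.beta a b + 1 := by omega
    rw [beta_add_one_mem_betaSet_iff, not_and, ← ne_eq] at hx'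
    have hbc : lam.Addable b (lam.part b) :=
      ⟨rfl, or_iff_not_imp_left.2 fun hb => (lam.antitone b.pred_le).lt_of_ne (hx' hb)⟩
    exact ⟨(b, lam.part b), hbc, content_eq hbc⟩

lemma le_beta_zero {x : ℤ} (hx : x ∈ betaSet a lam) : x ≤ lam.beta a 0 := by
  obtain ⟨b, rfl⟩ := (lam.mem_betaSet a).1 hx
  exact (lam.beta_strictAnti a).antitone b.zero_le

variable {lam a}

lemma mem_betaSet_of_lt {N : ℕ} (hN : ∀ b, N ≤ b → lam.part b = 0) {x : ℤ} (hx : x < a - N) :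
    x ∈ betaSet a lam := by
  refine ⟨(a - 1 - x).toNat, ?_⟩
  rw [hN _ (by omega)]
  omega

lemma mem_image_beta_range_iff {N : ℕ} (hN : ∀ b, N ≤ b → lam.part b = 0) {x : ℤ} :
    x ∈ (Finset.range N).image (lam.beta a) ↔ x ∈ betaSet a lam ∧ a - N ≤ x := by
  simp only [Finset.mem_image, Finset.mem_range, mem_betaSet]
  constructor
  · rintro ⟨b, hb, rfl⟩
    exact ⟨⟨b, rfl⟩, by unfold beta; omega⟩
  · rintro ⟨⟨b, rfl⟩, hx⟩
    refine ⟨b, lt_of_not_ge fun hb => ?_, rfl⟩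
    rw [beta, hN b hb] at hx
    omega

end PartitionFun

/-! ### Levels of the runners of a core -/

section Core

variable {e : ℕ} {a : ℤ} {lam : PartitionFun}

lemma IsECore.sub_mul_mem_betaSet (hc : IsECore e a lam) {x : ℤ} (hx : x ∈ betaSet a lam) (n : ℕ) :
    x - n * (e : ℤ) ∈ betaSet a lam := by
  induction n with
  | zero => simpa using hx
  | succ n ih =>
    convert! hc _ ih using 1
    push_cast
    ring

lemma IsECore.of_charge (hc : IsECore e a lam) (a' : ℤ) : IsECore e a' lam := by
  rintro _ ⟨b, rfl⟩
  obtain ⟨b', hb'⟩ := hc _ ⟨b, rfl⟩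
  exact ⟨b', by linarith⟩

lemma IsECore.mem_betaSet_iff_le_level (he : 0 < e) (hc : IsECore e a lam) (i : ℕ) (q : ℤ) :
    q * (e : ℤ) + i ∈ betaSet a lam ↔ q ≤ level e a lam i := by
  have he' : (0 : ℤ) < e := by exact_mod_cast he
  have hbdd : BddAbove {x : ℤ | x * (e : ℤ) + i ∈ betaSet a lam} := by
    refine ⟨(lam.beta a 0 - i) / e, fun x hx => ?_⟩
    have := lam.le_beta_zero a hx
    rw [Int.le_ediv_iff_mul_le he']
    linarith
  have hne : {x : ℤ | x * (e : ℤ) + i ∈ betaSet a lam}.Nonempty := by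
    obtain ⟨N, hN⟩ := lam.finite_support
    refine ⟨(a - N - 1 - i) / e, PartitionFun.mem_betaSet_of_lt hN ?_⟩
    have := Int.ediv_mul_le (a - N - 1 - i) he'.ne'
    linarith
  refine ⟨fun hq => le_csSup hbdd hq, fun hq => ?_⟩
  have htop : level e a lam i * (e : ℤ) + i ∈ betaSet a lam := Int.csSup_mem hne hbdd
  convert! hc.sub_mul_mem_betaSet htop (level e a lam i - q).toNat using 1
  rw [Int.toNat_of_nonneg (by omega)]
  ring

lemma IsECore.level_add_self (he : 0 < e) (hc : IsECore e a lam) (i : ℕ) :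
    level e a lam (i + e) = level e a lam i - 1 := by
  refine eq_of_forall_le_iff fun q => ?_
  rw [← hc.mem_betaSet_iff_le_level he, le_sub_iff_add_le, ← hc.mem_betaSet_iff_le_level he]
  push_cast
  ring_nf

lemma IsECore.level_add_mul (he : 0 < e) (hc : IsECore e a lam) (t : ℤ) (i : ℕ) :
    level e (a + e * t) lam i = level e a lam i + t := by
  refine eq_of_forall_le_iff fun q => ?_
  rw [← (hc.of_charge _).mem_betaSet_iff_le_level he, ← sub_le_iff_le_add,
    ← hc.mem_betaSet_iff_le_level he]
  refine exists_congr fun b => ⟨fun hb => ?_, fun hb => ?_⟩ <;> linarith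

lemma IsECore.sub_one_le_level (he : 0 < e) (hc : IsECore e a lam) {N : ℕ} {M : ℤ}
    (hN : ∀ b, N ≤ b → lam.part b = 0) (hM : a - N = M * e) {i : ℕ} (hi : i < e) :
    M - 1 ≤ level e a lam i := by
  rw [← hc.mem_betaSet_iff_le_level he]
  apply PartitionFun.mem_betaSet_of_lt hN
  rw [hM, sub_one_mul]
  omega

lemma IsECore.sum_beta_range (he : 0 < e) (hc : IsECore e a lam) {N : ℕ} {M : ℤ}
    (hN : ∀ b, N ≤ b → lam.part b = 0) (hM : a - N = M * e) (F : ℤ → ℤ) :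
    ∑ b ∈ Finset.range N, F (lam.beta a b) =
      ∑ i ∈ Finset.range e, ∑ q ∈ Finset.Icc M (level e a lam i), F (q * e + i) := by
  have he' : (0 : ℤ) < e := by exact_mod_cast he
  have ediv_eq {i : ℕ} (hi : i < e) (q : ℤ) : (q * e + i) / (e : ℤ) = q := by
    rw [Int.ediv_eq_iff_of_pos he']
    omega
  rw [← Finset.sum_image (f := F) (lam.beta_strictAnti a).injective.injOn, Finset.sum_sigma']
  refine (Finset.sum_nbij' (fun p : (_ : ℕ) × ℤ => p.2 * (e : ℤ) + p.1)
    (fun x : ℤ => ⟨(x % (e : ℤ)).toNat, x / e⟩) ?_ ?_ ?_ ?_ fun _ _ => rfl).symm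
  · rintro ⟨i, q⟩ hiq
    simp only [Finset.mem_sigma, Finset.mem_range, Finset.mem_Icc] at hiq
    rw [PartitionFun.mem_image_beta_range_iff hN, hM, ← Int.le_ediv_iff_mul_le he',
      ediv_eq hiq.1]
    exact ⟨(hc.mem_betaSet_iff_le_level he i q).2 hiq.2.2, hiq.2.1⟩
  · intro x hx
    rw [PartitionFun.mem_image_beta_range_iff hN, hM, ← Int.le_ediv_iff_mul_le he'] at hx
    have hmod := Int.emod_nonneg x he'.ne'
    have hlt := Int.emod_lt_of_pos x he'
    simp only [Finset.mem_sigma, Finset.mem_range, Finset.mem_Icc]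
    refine ⟨by omega, hx.2, ?_⟩
    rw [← hc.mem_betaSet_iff_le_level he, Int.toNat_of_nonneg hmod, Int.ediv_mul_add_emod]
    exact hx.1
  · rintro ⟨i, q⟩ hiq
    have hi : i < e := Finset.mem_range.1 (Finset.mem_sigma.1 hiq).1
    have hmod : (q * e + i) % (e : ℤ) = i := by
      rw [Int.emod_def, ediv_eq hi]
      ring
    simp only [hmod, ediv_eq hi, Int.toNat_natCast]
  · intro x _
    simp only [Int.toNat_of_nonneg (Int.emod_nonneg x he'.ne'), Int.ediv_mul_add_emod]

lemma exists_support_bound_sub_eq_mul (he : 0 < e) (a : ℤ) (l l' : PartitionFun) :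
    ∃ (N : ℕ) (M : ℤ), (∀ b, N ≤ b → l.part b = 0) ∧ (∀ b, N ≤ b → l'.part b = 0) ∧
      a - N = M * e := by
  have he' : (0 : ℤ) < e := by exact_mod_cast he
  obtain ⟨N, hN⟩ := l.finite_support
  obtain ⟨N', hN'⟩ := l'.finite_support
  have hle := Int.ediv_mul_le (a - max N N') he'.ne'
  refine ⟨(a - (a - max N N') / e * e).toNat, (a - max N N') / e, fun b hb => hN b ?_,
    fun b hb => hN' b ?_, ?_⟩ <;> omega

lemma IsECore.sum_level (he : 0 < e) (hc : IsECore e a lam) :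
    ∑ i ∈ Finset.range e, level e a lam i = a - e := by
  obtain ⟨N, M, hN, -, hM⟩ := exists_support_bound_sub_eq_mul he a lam lam
  have hcount : (N : ℤ) = ∑ i ∈ Finset.range e, (level e a lam i - M + 1) := by
    have hbeads := hc.sum_beta_range he hN hM fun _ => 1
    simp only [Finset.sum_const, Finset.card_range, Int.card_Icc, nsmul_eq_mul, mul_one] at hbeads
    rw [hbeads]
    refine Finset.sum_congr rfl fun i hi => ?_
    have := hc.sub_one_le_level he hN hM (Finset.mem_range.1 hi)
    omega
  simp only [Finset.sum_add_distrib, Finset.sum_sub_distrib, Finset.sum_const, Finset.card_range,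
    nsmul_eq_mul, mul_one] at hcount
  linarith

end Core

/-! ### Hubs in terms of levels -/

lemma setOf_and_emod_eq_image {e : ℕ} (P : ℤ → Prop) (i : ℤ) :
    {x : ℤ | P x ∧ x % (e : ℤ) = i % e} = (fun q : ℤ => q * e + i) '' {q | P (q * e + i)} := by
  ext x
  constructor
  · rintro ⟨hx, hmod⟩
    obtain ⟨q, hq⟩ := Int.ModEq.dvd (Int.ModEq.symm hmod)
    obtain rfl : x = q * e + i := by linarith
    exact ⟨q, hx, rfl⟩
  · rintro ⟨q, hq, rfl⟩
    exact ⟨hq, Int.mul_add_emod_self_right _ _ _⟩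

lemma ncard_and_emod_eq_of_bijOn {α : Type*} {f : α → ℤ} {A : α → Prop} {P : ℤ → Prop}
    (hf : Set.BijOn f {p | A p} {x | P x}) {e : ℕ} (he : 0 < e) (i : ℤ) :
    {p | A p ∧ f p % (e : ℤ) = i % e}.ncard = {q : ℤ | P (q * e + i)}.ncard := by
  have hinj : Function.Injective fun q : ℤ => q * (e : ℤ) + i := fun p q hpq =>
    mul_right_cancel₀ (by omega) (add_right_cancel hpq)
  rw [← Set.ncard_image_of_injective _ hinj, ← setOf_and_emod_eq_image]
  exact (hf.inter_mapsTo (s₂ := {p | f p % (e : ℤ) = i % e}) (t₂ := {x | x % (e : ℤ) = i % e})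
    (fun _ hp => hp) fun _ hp => hp.2).ncard_eq

section Hub

variable {e r : ℕ} {a : Fin r → ℤ} {m : Multipartition r}

lemma IsMulticore.delta_succ (he : 0 < e) (hm : IsMulticore e a m) (i : ℕ) (j : Fin r) :
    delta e a m ((i + 1 : ℕ) : ℤ) j =
      level e (a j) (m j) (i + 1) - level e (a j) (m j) i := by
  have hpred (q : ℤ) : q * (e : ℤ) + (i + 1 : ℕ) - 1 = q * e + i := by
    push_cast
    ring
  have hrem : removableCount e a m ((i + 1 : ℕ) : ℤ) j =
      (Set.Ioc (level e (a j) (m j) i) (level e (a j) (m j) (i + 1))).ncard := by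
    refine (ncard_and_emod_eq_of_bijOn ((m j).bijOn_removable (a j)) he _).trans ?_
    congr 1
    ext q
    simp only [Set.mem_ofPred_eq, Set.mem_Ioc, hpred, (hm j).mem_betaSet_iff_le_level he, not_le,
      and_comm]
  have hadd : addableCount e a m ((i + 1 : ℕ) : ℤ) j =
      (Set.Ioc (level e (a j) (m j) (i + 1)) (level e (a j) (m j) i)).ncard := by
    refine (ncard_and_emod_eq_of_bijOn ((m j).bijOn_addable (a j)) he _).trans ?_
    congr 1
    ext q
    simp only [Set.mem_ofPred_eq, Set.mem_Ioc, hpred, (hm j).mem_betaSet_iff_le_level he, not_le,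
      and_comm]
  rw [delta, hrem, hadd]
  simp only [← Finset.coe_Ioc, Set.ncard_coe_finset, Int.card_Ioc]
  omega

lemma IsMulticore.hub_succ (he : 0 < e) (hm : IsMulticore e a m) (i : ℕ) :
    hub e a m ((i + 1 : ℕ) : ℤ) =
      ∑ j, level e (a j) (m j) (i + 1) - ∑ j, level e (a j) (m j) i := by
  simp only [hub, hm.delta_succ he, Finset.sum_sub_distrib]

lemma SameHub.sum_level_eq {m' : Multipartition r} (hs : SameHub e a m m') (he : 0 < e)
    (hm : IsMulticore e a m) (hm' : IsMulticore e a m') (i : ℕ) :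
    ∑ j, level e (a j) (m j) i = ∑ j, level e (a j) (m' j) i := by
  have hconst (i : ℕ) : ∑ j, level e (a j) (m j) i - ∑ j, level e (a j) (m' j) i =
      ∑ j, level e (a j) (m j) 0 - ∑ j, level e (a j) (m' j) 0 := by
    induction i with
    | zero => rfl
    | succ i ih =>
      have := hs ((i + 1 : ℕ) : ℤ)
      rw [hm.hub_succ he, hm'.hub_succ he] at this
      linarith
  have htotal : ∑ i ∈ Finset.range e,
      (∑ j, level e (a j) (m j) i - ∑ j, level e (a j) (m' j) i) = 0 := by
    rw [Finset.sum_sub_distrib, Finset.sum_comm, Finset.sum_comm (s := Finset.range e)]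
    simp only [(hm _).sum_level he, (hm' _).sum_level he, sub_self]
  rw [Finset.sum_congr rfl fun i _ => hconst i, Finset.sum_const, Finset.card_range,
    smul_eq_zero_iff_right he.ne', ← hconst i] at htotal
  exact sub_eq_zero.1 htotal

end Hub

/-! ### Counting nodes by residue -/

/-- The number of nodes of residue `i` modulo `e` in the diagram of a single partition with charge
`a`; the contribution of one component to `nodeCount`. -/
noncomputable def residueCount (e : ℕ) (a : ℤ) (lam : PartitionFun) (i : ℤ) : ℕ :=
  Set.ncard {p : ℕ × ℕ | lam.InDiag p.1 p.2 ∧ (a + (p.2 : ℤ) - (p.1 : ℤ)) % (e : ℤ) = i % e}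

section ResidueCount

variable {e : ℕ} {a : ℤ} {lam : PartitionFun}

lemma finite_setOf_inDiag (lam : PartitionFun) : {p : ℕ × ℕ | lam.InDiag p.1 p.2}.Finite := by
  obtain ⟨N, hN⟩ := lam.finite_support
  refine ((Set.finite_Iio N).prod (Set.finite_Iio (lam.part 0))).subset ?_
  rintro ⟨b, c⟩ hbc
  have hc : c < lam.part b := hbc
  refine ⟨Set.mem_Iio.2 (lt_of_not_ge fun hb => ?_), hc.trans_le (lam.antitone b.zero_le)⟩
  rw [hN b hb] at hc
  exact Nat.not_lt_zero c hc

lemma nodeCount_eq_sum_residueCount {r : ℕ} (e : ℕ) (a : Fin r → ℤ) (m : Multipartition r)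
    (i : ℤ) : nodeCount e a m i = ∑ j, residueCount e (a j) (m j) i := by
  have (j : Fin r) : Finite {p : ℕ × ℕ | (m j).InDiag p.1 p.2 ∧
      (a j + (p.2 : ℤ) - (p.1 : ℤ)) % (e : ℤ) = i % e} :=
    (finite_setOf_inDiag (m j)).subset fun _ hp => hp.1
  refine Eq.trans (Nat.card_congr ?_) Nat.card_sigma
  exact
    { toFun := fun x => ⟨x.1.2.2, (x.1.1, x.1.2.1), x.2⟩
      invFun := fun y => ⟨(y.2.1.1, y.2.1.2, y.1), y.2.2⟩
      left_inv := fun _ => rfl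
      right_inv := fun _ => rfl }

lemma card_filter_emod_eq (he : 0 < e) (z i : ℤ) (n : ℕ) :
    (((Finset.range n).filter fun c : ℕ => (z + c) % (e : ℤ) = i % e).card : ℤ) =
      (z + n - 1 - i) / e - (z - 1 - i) / e := by
  have he' : (0 : ℤ) < e := by exact_mod_cast he
  have hcard : ((Finset.range n).filter fun c : ℕ => (z + c) % (e : ℤ) = i % e).card =
      ((Finset.Ioc (z - 1) (z + n - 1)).filter fun x => x ≡ i [ZMOD e]).card := by
    refine Finset.card_nbij' (fun c : ℕ => z + c) (fun x => (x - z).toNat) ?_ ?_ ?_ ?_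
    all_goals
      intro x hx
      simp only [Finset.mem_coe, Finset.mem_filter, Finset.mem_range, Finset.mem_Ioc] at hx ⊢
    · exact ⟨by omega, hx.2⟩
    · rw [Int.toNat_of_nonneg (by omega), add_sub_cancel]
      exact ⟨by omega, hx.2⟩
    · omega
    · omega
  have hmono : (z - 1 - i) / (e : ℤ) ≤ (z + n - 1 - i) / e :=
    Int.ediv_le_ediv he' (by omega)
  have hfloor (x y : ℤ) : ⌊((x : ℚ) - y) / ((e : ℤ) : ℚ)⌋ = (x - y) / (e : ℤ) := by
    exact_mod_cast Rat.floor_intCast_div_natCast (x - y) e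
  rw [hcard, Int.Ioc_filter_modEq_card _ _ he', hfloor, hfloor, max_eq_left (by omega)]

lemma residueCount_eq_sum (he : 0 < e) (i : ℤ) {N : ℕ} (hN : ∀ b, N ≤ b → lam.part b = 0) :
    (residueCount e a lam i : ℤ) =
      ∑ b ∈ Finset.range N, ((lam.beta a b - i) / e - (a - (b + 1) - i) / e) := by
  have hset : {p : ℕ × ℕ | lam.InDiag p.1 p.2 ∧ (a + (p.2 : ℤ) - (p.1 : ℤ)) % (e : ℤ) = i % e} =
      ((Finset.range N).sigma fun b => (Finset.range (lam.part b)).filter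
        fun c : ℕ => (a - b + c) % (e : ℤ) = i % e).map
          (Equiv.sigmaEquivProd ℕ ℕ).toEmbedding := by
    ext ⟨b, c⟩
    have hrow : c < lam.part b → b < N := fun hc => lt_of_not_ge fun hb => by
      rw [hN b hb] at hc
      exact Nat.not_lt_zero c hc
    simp only [PartitionFun.InDiag, Set.mem_ofPred_eq, Finset.mem_coe, Finset.mem_map_equiv,
      Finset.mem_sigma, Finset.mem_filter, Finset.mem_range, Equiv.sigmaEquivProd_symm_apply,
      sub_add_eq_add_sub]
    tauto
  rw [residueCount, hset, Set.ncard_coe_finset, Finset.card_map, Finset.card_sigma, Nat.cast_sum]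
  refine Finset.sum_congr rfl fun b _ => ?_
  rw [card_filter_emod_eq he, PartitionFun.beta]
  congr 2 <;> ring

lemma two_mul_sum_Icc_sub {M L : ℤ} (hL : M - 1 ≤ L) (d : ℤ) :
    2 * ∑ q ∈ Finset.Icc M L, (q - d) = (L - M + 1) * (L + M - 2 * d) := by
  induction L, hL using Int.leInduction with
  | base => simp
  | succ L hL ih =>
    rw [← Finset.insert_Icc_right_eq_Icc_add_one (by linarith), Finset.sum_insert (by simp),
      mul_add, ih]
    ring

lemma mul_add_sub_ediv {i k : ℕ} (hi : i < e) (hk : k < e) (q : ℤ) :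
    (q * e + i - k) / (e : ℤ) = q - if i < k then 1 else 0 := by
  rw [Int.ediv_eq_iff_of_pos (by omega)]
  split_ifs <;> constructor <;> linarith

lemma IsECore.two_mul_sum_ediv (he : 0 < e) (hc : IsECore e a lam) {N : ℕ} {M : ℤ}
    (hN : ∀ b, N ≤ b → lam.part b = 0) (hM : a - N = M * e) {k : ℕ} (hk : k < e) :
    2 * ∑ b ∈ Finset.range N, (lam.beta a b - k) / (e : ℤ) =
      ∑ i ∈ Finset.range e,
        (level e a lam i - M + 1) * (level e a lam i + M - 2 * if i < k then 1 else 0) := by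
  rw [hc.sum_beta_range he hN hM fun x => (x - k) / e, Finset.mul_sum]
  refine Finset.sum_congr rfl fun i hi => ?_
  rw [Finset.mem_range] at hi
  rw [← two_mul_sum_Icc_sub (hc.sub_one_le_level he hN hM hi)]
  simp only [mul_add_sub_ediv hi hk]

lemma IsECore.two_mul_residueCount_sub {lam' : PartitionFun} (hc : IsECore e a lam)
    (hc' : IsECore e a lam') {k : ℕ} (hk : k < e) :
    2 * ((residueCount e a lam k : ℤ) - residueCount e a lam' k) =
      ∑ i ∈ Finset.range e, (level e a lam i ^ 2 - level e a lam' i ^ 2 +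
        (1 - 2 * if i < k then 1 else 0) * (level e a lam i - level e a lam' i)) := by
  have he : 0 < e := k.zero_le.trans_lt hk
  obtain ⟨N, M, hN, hN', hM⟩ := exists_support_bound_sub_eq_mul he a lam lam'
  rw [residueCount_eq_sum he _ hN, residueCount_eq_sum he _ hN', Finset.sum_sub_distrib,
    Finset.sum_sub_distrib, sub_sub_sub_cancel_right, mul_sub, hc.two_mul_sum_ediv he hN hM hk,
    hc'.two_mul_sum_ediv he hN' hM hk, ← Finset.sum_sub_distrib]
  exact Finset.sum_congr rfl fun i _ => by ring

end ResidueCount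

/-! ### Weights of multicores with the same hub -/

section Congr

variable {e r : ℕ} {a a' : Fin r → ℤ}

lemma nodeCount_congr (ha : ∀ j, a j ≡ a' j [ZMOD e]) (m : Multipartition r) {i i' : ℤ}
    (hi : i ≡ i' [ZMOD e]) : nodeCount e a m i = nodeCount e a' m i' := by
  have hres (x : Node r) : (a x.2.2 + (x.2.1 : ℤ) - x.1) % (e : ℤ) = (a' x.2.2 + x.2.1 - x.1) % e :=
    ((ha x.2.2).add_right _).sub_right _
  rw [Int.ModEq] at hi
  simp only [nodeCount, hres, hi]

lemma delta_congr (ha : ∀ j, a j ≡ a' j [ZMOD e]) (m : Multipartition r) {i i' : ℤ}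
    (hi : i ≡ i' [ZMOD e]) (j : Fin r) : delta e a m i j = delta e a' m i' j := by
  have hres (p : ℕ × ℕ) : (a j + (p.2 : ℤ) - p.1) % (e : ℤ) = (a' j + p.2 - p.1) % e :=
    ((ha j).add_right _).sub_right _
  rw [Int.ModEq] at hi
  simp only [delta, removableCount, addableCount, hres, hi]

lemma hub_congr (ha : ∀ j, a j ≡ a' j [ZMOD e]) (m : Multipartition r) (i : ℤ) :
    hub e a m i = hub e a' m i :=
  Finset.sum_congr rfl fun j _ => delta_congr ha m rfl j

lemma weight_congr (ha : ∀ j, a j ≡ a' j [ZMOD e]) (m : Multipartition r) :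
    weight e a m = weight e a' m := by
  simp only [weight, nodeCount_congr ha m (ha _), nodeCount_congr ha m (Int.ModEq.refl _)]

end Congr

section Weight

variable {e r : ℕ} {a : Fin r → ℤ} {m m' : Multipartition r}

lemma SameHub.two_mul_nodeCount_sub (hs : SameHub e a m m') (he : 0 < e)
    (hm : IsMulticore e a m) (hm' : IsMulticore e a m') (k : ℤ) :
    2 * ((nodeCount e a m k : ℤ) - nodeCount e a m' k) =
      ∑ i ∈ Finset.range e, ∑ j, (level e (a j) (m j) i ^ 2 - level e (a j) (m' j) i ^ 2) := by
  have he' : (0 : ℤ) < e := by exact_mod_cast he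
  lift k % (e : ℤ) to ℕ using Int.emod_nonneg k he'.ne' with k' hk'
  have hk'e : k' < e := by exact_mod_cast hk' ▸ Int.emod_lt_of_pos k he'
  have hmod : k ≡ k' [ZMOD e] := hk' ▸ (Int.mod_modEq k e).symm
  rw [nodeCount_congr (fun _ => rfl) m hmod, nodeCount_congr (fun _ => rfl) m' hmod,
    nodeCount_eq_sum_residueCount, nodeCount_eq_sum_residueCount]
  push_cast
  rw [← Finset.sum_sub_distrib, Finset.mul_sum,
    Finset.sum_congr rfl fun j _ => (hm j).two_mul_residueCount_sub (hm' j) hk'e, Finset.sum_comm]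
  refine Finset.sum_congr rfl fun i _ => ?_
  have hlin : ∑ j, (level e (a j) (m j) i - level e (a j) (m' j) i) = 0 := by
    rw [Finset.sum_sub_distrib, hs.sum_level_eq he hm hm' i, sub_self]
  rw [Finset.sum_add_distrib, ← Finset.mul_sum, hlin, mul_zero, add_zero]

lemma weight_eq_add_of_nodeCount_eq_add {T : ℚ}
    (hT : ∀ k, (nodeCount e a m k : ℚ) = nodeCount e a m' k + T) :
    weight e a m = weight e a m' + r * T := by
  simp only [weight, hT, Finset.sum_add_distrib, Finset.sum_const, Finset.card_univ,
    Fintype.card_fin, nsmul_eq_mul, add_sub_add_right_eq_sub]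
  ring

lemma SameHub.two_mul_weight_sub (hs : SameHub e a m m') (he : 0 < e)
    (hm : IsMulticore e a m) (hm' : IsMulticore e a m') :
    2 * (weight e a m - weight e a m') = r * ((∑ i ∈ Finset.range e, ∑ j,
      (level e (a j) (m j) i ^ 2 - level e (a j) (m' j) i ^ 2) : ℤ) : ℚ) := by
  rw [← hs.two_mul_nodeCount_sub he hm hm' 0]
  have hT (k : ℤ) : (nodeCount e a m k : ℚ) =
      nodeCount e a m' k + (nodeCount e a m 0 - nodeCount e a m' 0 : ℚ) := by
    have := (hs.two_mul_nodeCount_sub he hm hm' k).trans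
      (hs.two_mul_nodeCount_sub he hm hm' 0).symm
    have : (nodeCount e a m k : ℤ) =
      nodeCount e a m' k + (nodeCount e a m 0 - nodeCount e a m' 0) := by linarith
    exact_mod_cast this
  rw [weight_eq_add_of_nodeCount_eq_add hT]
  push_cast
  ring

end Weight

/-! ### Base tuples -/

/-- The runner `i - 1`, read cyclically in `{0, …, e - 1}`. -/
def prevRunner (e i : ℕ) : ℕ := if i = 0 then e - 1 else i - 1

lemma prevRunner_lt {e i : ℕ} (hi : i < e) : prevRunner e i < e := by
  unfold prevRunner
  split_ifs <;> omega

lemma prevRunner_ne {e : ℕ} (he : 2 ≤ e) (i : ℕ) : prevRunner e i ≠ i := by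
  unfold prevRunner
  split_ifs <;> omega

section BaseTuple

variable {e r : ℕ} {a a' : Fin r → ℤ} {m mu : Multipartition r} {b : ℕ → ℤ} {i : ℕ}

lemma IsMulticore.of_charge (hm : IsMulticore e a m) (a' : Fin r → ℤ) : IsMulticore e a' m :=
  fun j => (hm j).of_charge (a' j)

lemma IsMulticore.delta_eq_level_sub (he : 0 < e) (hm : IsMulticore e a m) (i : ℕ) (j : Fin r) :
    delta e a m i j = level e (a j) (m j) i - level e (a j) (m j) (prevRunner e i) -
      if i = 0 then 1 else 0 := by
  cases i with
  | zero =>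
    have hzero : ((0 : ℕ) : ℤ) ≡ ((e - 1 + 1 : ℕ) : ℤ) [ZMOD e] := by
      rw [Nat.sub_add_cancel he]
      exact (Int.modEq_zero_iff_dvd.2 dvd_rfl).symm
    have hwrap := (hm j).level_add_self he 0
    rw [delta_congr (fun _ => rfl) m hzero, hm.delta_succ he, Nat.sub_add_cancel he]
    simp only [zero_add] at hwrap
    simp only [prevRunner, if_true, hwrap]
    ring
  | succ i =>
    rw [hm.delta_succ he, prevRunner, if_neg i.succ_ne_zero, if_neg i.succ_ne_zero, sub_zero,
      Nat.add_sub_cancel]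

lemma IsBaseTuple.modEq (hb : IsBaseTuple e a mu a' b) (j : Fin r) : a j ≡ a' j [ZMOD e] :=
  Int.modEq_iff_dvd.2 (hb.1 j)

lemma IsBaseTuple.two_mul_weight_sub (hb : IsBaseTuple e a mu a' b) (he : 0 < e)
    (hmu : IsMulticore e a mu) (hm : IsMulticore e a m) (hs : SameHub e a m mu) :
    2 * (weight e a m - weight e a mu) = r * ((∑ i ∈ Finset.range e, ∑ j,
      (level e (a' j) (m j) i - b i) * (level e (a' j) (m j) i - b i - 1) : ℤ) : ℚ) := by
  have hs' : SameHub e a' m mu := fun i => by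
    rw [← hub_congr hb.modEq, ← hub_congr hb.modEq, hs]
  have hm' := hm.of_charge a'
  have hmu' := hmu.of_charge a'
  rw [weight_congr hb.modEq, weight_congr hb.modEq, hs'.two_mul_weight_sub he hm' hmu']
  congr 2
  refine Finset.sum_congr rfl fun i hi => ?_
  have hterm (j : Fin r) : level e (a' j) (m j) i ^ 2 - level e (a' j) (mu j) i ^ 2 =
      (level e (a' j) (m j) i - b i) * (level e (a' j) (m j) i - b i - 1) +
        (2 * b i + 1) * (level e (a' j) (m j) i - level e (a' j) (mu j) i) := by
    rcases hb.2 i (Finset.mem_range.1 hi) j with hj | hj <;> rw [hj] <;> ring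
  simp only [hterm, Finset.sum_add_distrib, ← Finset.mul_sum]
  rw [Finset.sum_sub_distrib, hs'.sum_level_eq he hm' hmu' i, sub_self, mul_zero, add_zero]

lemma mul_sub_one_nonneg (x : ℤ) : 0 ≤ x * (x - 1) := by
  linarith [Int.le_self_sq x]

lemma sub_sub_one_le_of_sum_mul_sub_one_le {ι κ : Type*} [Fintype κ] {s : Finset ι}
    {x : ι → κ → ℤ} {h : ℤ} (hx : ∑ i ∈ s, ∑ j, x i j * (x i j - 1) ≤ 2 * h) {i p : ι}
    (hi : i ∈ s) (hp : p ∈ s) (hip : i ≠ p) (j : κ) : x p j - x i j - 1 ≤ h := by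
  have hrow (i : ι) : x i j * (x i j - 1) ≤ ∑ j, x i j * (x i j - 1) :=
    Finset.single_le_sum (fun j _ => mul_sub_one_nonneg (x i j)) (Finset.mem_univ j)
  have hpair : x i j * (x i j - 1) + x p j * (x p j - 1) ≤ 2 * h :=
    calc x i j * (x i j - 1) + x p j * (x p j - 1)
        ≤ ∑ j, x i j * (x i j - 1) + ∑ j, x p j * (x p j - 1) := add_le_add (hrow i) (hrow p)
      _ ≤ ∑ i ∈ s, ∑ j, x i j * (x i j - 1) := Finset.add_le_sum
        (f := fun i => ∑ j, x i j * (x i j - 1))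
        (fun i _ => Finset.sum_nonneg fun j _ => mul_sub_one_nonneg (x i j)) hi hp hip
      _ ≤ 2 * h := hx
  linarith [mul_sub_one_nonneg (x i j + 1), mul_sub_one_nonneg (x p j - 1)]

lemma IsBaseTuple.sub_le_delta (hb : IsBaseTuple e a mu a' b) (he : 2 ≤ e)
    (hmu : IsMulticore e a mu) (hm : IsMulticore e a m) (hs : SameHub e a m mu) {h : ℤ}
    (hw : weight e a m = weight e a mu + h * r) (hi : i < e) (j : Fin r) :
    b i - b (prevRunner e i) - (if i = 0 then 2 else 1) - h ≤ delta e a m i j := by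
  have he0 : 0 < e := by omega
  have hr : (r : ℚ) ≠ 0 := by exact_mod_cast (Fin.pos j).ne'
  have htotal : ∑ i ∈ Finset.range e, ∑ j,
      (level e (a' j) (m j) i - b i) * (level e (a' j) (m j) i - b i - 1) = 2 * h := by
    have hwt := hb.two_mul_weight_sub he0 hmu hm hs
    rw [hw, add_sub_cancel_left, mul_comm (h : ℚ), mul_left_comm] at hwt
    exact_mod_cast (mul_left_cancel₀ hr hwt).symm
  have hgap := sub_sub_one_le_of_sum_mul_sub_one_le htotal.le (Finset.mem_range.2 hi)
    (Finset.mem_range.2 (prevRunner_lt hi)) (prevRunner_ne he i).symm j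
  rw [delta_congr hb.modEq m rfl, (hm.of_charge a').delta_eq_level_sub he0]
  split_ifs <;> linarith

lemma IsBaseTuple.add_const (hb : IsBaseTuple e a mu a' b) (he : 0 < e)
    (hmu : IsMulticore e a mu) (t : ℤ) :
    IsBaseTuple e a mu (fun j => a' j + e * t) (fun i => b i + t) := by
  refine ⟨fun j => ?_, fun i hi j => ?_⟩
  · rw [add_sub_right_comm]
    exact (hb.1 j).add (dvd_mul_right _ _)
  · rw [((hmu j).of_charge (a' j)).level_add_mul he]
    exact (hb.2 i hi j).imp (congrArg (· + t)) fun hj => by rw [hj, add_right_comm]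

lemma exists_isBaseTuple_Kconst_eq (he : 2 ≤ e) (hr : 0 < r) (hi : i < e)
    (hmu : IsMulticore e a mu) (hbase : ∃ a' b, IsBaseTuple e a mu a' b) :
    ∃ a' b, IsBaseTuple e a mu a' b ∧
      Kconst e a mu i = b i - b (prevRunner e i) - if i = 0 then 2 else 1 := by
  obtain ⟨a', b, hb⟩ := hbase
  have hshift := hb.add_const (by omega) hmu
  -- `b i` is unbounded above, so the supremum in `Kconst` is the junk value `0`; this amounts to
  -- normalising base tuples to `b i = 0`.
  have hsup : sSup {x : ℤ | ∃ a' b, IsBaseTuple e a mu a' b ∧ b i = x} = 0 := by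
    refine Int.csSup_of_not_bddAbove fun ⟨u, hu⟩ => ?_
    have := hu ⟨_, _, hshift (u + 1 - b i), add_sub_cancel (b i) (u + 1)⟩
    omega
  have hne :
      {x : ℤ | ∃ a' b, IsBaseTuple e a mu a' b ∧ b i = 0 ∧ b (prevRunner e i) = x}.Nonempty :=
    ⟨_, _, _, hshift (-b i), add_neg_cancel (b i), rfl⟩
  have hbdd : BddBelow
      {x : ℤ | ∃ a' b, IsBaseTuple e a mu a' b ∧ b i = 0 ∧ b (prevRunner e i) = x} := by
    refine ⟨-(if i = 0 then 2 else 1) - delta e a mu i ⟨0, hr⟩, ?_⟩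
    rintro _ ⟨a', b, hb, hbi, rfl⟩
    have := hb.sub_le_delta he hmu hmu (fun _ => rfl) (h := 0) (by simp) hi ⟨0, hr⟩
    linarith
  obtain ⟨a', b, hb, hbi, hbp⟩ := Int.csInf_mem hne hbdd
  refine ⟨a', b, hb, ?_⟩
  rw [hbi, hbp]
  simp only [Kconst, hsup, prevRunner]

lemma exists_isBaseTuple_of_Kconst_nonneg (hK : 0 ≤ Kconst e a mu i) :
    ∃ a' b, IsBaseTuple e a mu a' b := by
  by_contra! hnone
  simp only [Kconst, hnone, false_and, exists_false, Set.ofPred_false, Int.csSup_empty,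
    Int.csInf_empty] at hK
  split_ifs at hK <;> omega

lemma le_dmin (hr : 0 < r) {d i : ℤ} (hd : ∀ j, d ≤ delta e a m i j) : d ≤ dmin e a m i := by
  refine le_csInf ⟨_, ⟨0, hr⟩, rfl⟩ ?_
  rintro _ ⟨j, rfl⟩
  exact hd j

end BaseTuple

theorem stmt_7_general {e r : ℕ} (he : 2 ≤ e) (hr : 0 < r) (a : Fin r → ℤ)
    (ibar : ℕ) (hibar : ibar < e)
    (mu0 : Multipartition r) (hmu0core : IsMulticore e a mu0)
    (hbase : ∃ a' b, IsBaseTuple e a mu0 a' b)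
    (m : Multipartition r) (hcore : IsMulticore e a m)
    (hsame : SameHub e a m mu0)
    (h : ℤ) (hw : weight e a m = weight e a mu0 + (h : ℚ) * (r : ℚ)) :
    dmin e a m (ibar : ℤ) ≥ Kconst e a mu0 ibar - h := by
  obtain ⟨a', b, hb, hK⟩ := exists_isBaseTuple_Kconst_eq he hr hibar hmu0core hbase
  rw [hK]
  exact le_dmin hr fun j => hb.sub_le_delta he hmu0core hcore hsame hw hibar j

/-- Proposition 4.8: fix `ī ∈ {0,…,e−1}`, let `C` be a core block
(given by a multicore `mu0` of minimal weight in its hub class) and `K = K_ī(C)`.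
If `m` is a multicore with core block `C` and `w(m) = w(C) + h·r` with
`0 ≤ h ≤ K`, then `d_ī(m) ≥ K − h`. -/
theorem stmt_7 {e r : ℕ} (he : 2 ≤ e) (hr : 0 < r) (a : Fin r → ℤ)
    (ibar : ℕ) (hibar : ibar < e)
    (mu0 : Multipartition r) (hmu0core : IsMulticore e a mu0)
    (hmu0min : MinimalWeight e a mu0)
    (m : Multipartition r) (hcore : IsMulticore e a m)
    (hsame : SameHub e a m mu0)
    (h : ℤ) (hh0 : 0 ≤ h) (hhK : h ≤ Kconst e a mu0 ibar)
    (hw : weight e a m = weight e a mu0 + (h : ℚ) * (r : ℚ)) :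
    dmin e a m (ibar : ℤ) ≥ Kconst e a mu0 ibar - h :=
  stmt_7_general he hr a ibar hibar mu0 hmu0core
    (exists_isBaseTuple_of_Kconst_nonneg (hh0.trans hhK)) m hcore hsame h hw

end AK
end
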